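/- For α > 1, in the family f_a(x) = −|x|^α + a there exists exactly one parameter a = a(α) for which the critical point 0 is periodic of period 8 with kneading sequence RLRRRLRC (i.e. f_a^8(0) = 0 and the itinerary of the critical orbit is R, L, R, R, R, L, R, then back to the critical point). -/

import Mathlib

/-!
Put `β = 1/α` and `k = a ^ (β - 1)`, and let `uᵢ = |cᵢ| / a` be the normalized absolute values of
the critical orbit `cᵢ = f_a^i(0)`. Following the itinerary `RLRRRLRC` backwards from `c₈ = 0`, one
gets `u₇ = k`, `u₆ = k (1 - u₇)^β`, `u₅ = k (1 + u₆)^β`, `u₄ = k (1 - u₅)^β`, `u₃ = k (1 - u₄)^β`,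
`u₂ = k (1 - u₃)^β`, and the orbit closes up iff `F k := k (1 + u₂)^β = 1`. The parameters of the
theorem correspond exactly to the `k ∈ (0, 1)` with `u₅ < 1` and `F k = 1`.

*Uniqueness* is transversality: `F' > 0` at each such `k` (and `u₅' > 0` wherever `u₅ ≤ 1`, so that
`{u₅ < 1}` is an interval), whence `F` cannot take the value `1` twice.
Let `Eᵢ` be the logarithmic derivative of `uᵢ` with respect to `log k`. Each step of the recursion
gives `Eᵢ = 1 ± β uᵢ₊₁ / (1 ± uᵢ₊₁) Eᵢ₊₁`, so that
`E₁ = (1 + q₂ - q₂ p₃ + q₂ p₃ p₄) - q₂ p₃ p₄ p₅ E₅` and `E₅ = 1 + q₆ - q₆ p₇`, with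
`pᵢ = β uᵢ / (1 - uᵢ)` and `qᵢ = β uᵢ / (1 + uᵢ)`. Two facts give `E₁ > 0`:

* `q₆ ≤ q₂` and `q₂ p₃ ≤ q₆ p₇`, from `u₃ ≤ k` and `u₆ ≤ u₂`, hence `1 + q₂ - q₂ p₃ ≥ E₅ > 0`;
* `q₂ p₃ p₄ p₅ < 1`. This product is `u₅` divided by the absolute value of the derivative of the
  fourth iterate at the critical value, so it is enough that this derivative is at least `1`. The
  fourth iterate exchanges the end points of `[u₅, 1]` (after normalization), so its slope there is
  `1` on average; comparing the factors at the end point `1` with the average slopes of the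
  successive maps (Bernoulli's inequality) gives the bound, because `u₄ ≤ 1 / (1 + β)`.

*Existence*: let `s` be the value of `k` at which `u₅ = 1` (the parameter of period `4`). At `s` one
has `u₄ = 0`, and `u₄` has infinite slope there, which forces `F > 1` just to the left of `s`. Since
`F 0 = 0`, the intermediate value theorem applies.
-/

/-- The quasi-quadratic power-law map `x ↦ -|x|^α + a`. -/
noncomputable def f (α a : ℝ) : ℝ → ℝ := fun x => -|x| ^ α + a

open Set Filter Topology

/-- The normalized modulus of the sixth iterate, in terms of `k = a ^ (β - 1)`. -/
noncomputable def U6 (β k : ℝ) : ℝ := k * (1 - k) ^ β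

/-- The normalized modulus of the fifth iterate. -/
noncomputable def U5 (β k : ℝ) : ℝ := k * (1 + U6 β k) ^ β

/-- The normalized modulus of the fourth iterate; meaningful only where `U5 β k ≤ 1`. Elsewhere the
base of the power is negative and the value, though continuous in `k`, is irrelevant. -/
noncomputable def U4 (β k : ℝ) : ℝ := k * (1 - U5 β k) ^ β

/-- The normalized modulus of the third iterate, where `U5 β k ≤ 1`. -/
noncomputable def U3 (β k : ℝ) : ℝ := k * (1 - U4 β k) ^ β

/-- The normalized modulus of the second iterate, where `U5 β k ≤ 1`. -/
noncomputable def U2 (β k : ℝ) : ℝ := k * (1 - U3 β k) ^ β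

/-- The closing function: the periodic orbit closes up exactly when it equals `1`. -/
noncomputable def U1 (β k : ℝ) : ℝ := k * (1 + U2 β k) ^ β

/-! ### Elementary inequalities -/

/-- A differentiable-at-zeros function that crosses zero only upwards stays positive. -/
lemma pos_of_crossing_up {φ : ℝ → ℝ} {a b : ℝ} (hab : a < b) (hc : ContinuousOn φ (Icc a b))
    (ha : 0 ≤ φ a) (hd : ∀ x ∈ Icc a b, φ x = 0 → ∃ d > 0, HasDerivAt φ d x) : 0 < φ b := by
  -- Right of an upward zero `φ` is positive, left of it `φ` is negative.
  have hright : ∀ x ∈ Icc a b, φ x = 0 → ∀ᶠ y in 𝓝[>] x, 0 < φ y := by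
    intro x hx h0
    obtain ⟨d, hd0, hdx⟩ := hd x hx h0
    have h1 := (hasDerivAt_iff_tendsto_slope.1 hdx).eventually (lt_mem_nhds hd0)
    have h2 := h1.filter_mono (nhdsWithin_mono x (fun y (hy : x < y) => ne_of_gt hy))
    filter_upwards [h2, self_mem_nhdsWithin] with y hy hxy
    rw [slope_def_field, h0, sub_zero] at hy
    have hxy' : 0 < y - x := sub_pos.2 hxy
    exact (div_pos_iff_of_pos_right hxy').1 hy
  have hleft : ∀ x ∈ Icc a b, φ x = 0 → ∀ᶠ y in 𝓝[<] x, φ y < 0 := by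
    intro x hx h0
    obtain ⟨d, hd0, hdx⟩ := hd x hx h0
    have h1 := (hasDerivAt_iff_tendsto_slope.1 hdx).eventually (lt_mem_nhds hd0)
    have h2 := h1.filter_mono (nhdsWithin_mono x (fun y (hy : y < x) => ne_of_lt hy))
    filter_upwards [h2, self_mem_nhdsWithin] with y hy hxy
    rw [slope_def_field, h0, sub_zero] at hy
    have hxy' : y - x < 0 := sub_neg.2 hxy
    by_contra hcon
    push Not at hcon
    exact absurd hy (not_lt.2 (div_nonpos_of_nonneg_of_nonpos hcon hxy'.le))
  have key : ∀ c, a < c → c ≤ b → ¬ φ c < 0 := by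
    intro c hac hcb hneg
    have hc' : ContinuousOn φ (Icc a c) := hc.mono (Icc_subset_Icc_right hcb)
    -- The last point of `[a, c]` at which `φ` is nonnegative.
    have hcomp : IsCompact (Icc a c ∩ φ ⁻¹' Ici 0) :=
      isCompact_Icc.of_isClosed_subset
        (hc'.preimage_isClosed_of_isClosed isClosed_Icc isClosed_Ici) inter_subset_left
    obtain ⟨m, ⟨hm, hm0⟩, hmax⟩ :=
      hcomp.exists_isGreatest ⟨a, ⟨le_refl a, hac.le⟩, ha⟩
    have hm0' : 0 ≤ φ m := hm0
    have hmc : m < c := lt_of_le_of_ne hm.2 (by rintro rfl; linarith)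
    have hlt : ∀ y ∈ Ioc m c, φ y < 0 := by
      intro y hy
      by_contra hcon
      push Not at hcon
      exact absurd (hmax ⟨⟨hm.1.trans hy.1.le, hy.2⟩, hcon⟩) (not_le.2 hy.1)
    have hmz : φ m = 0 := by
      refine le_antisymm ?_ hm0'
      have ht : Tendsto φ (𝓝[>] m) (𝓝 (φ m)) :=
        ((hc' m hm).mono_of_mem_nhdsWithin
          (mem_of_superset (Ioc_mem_nhdsGT hmc) (fun y hy => ⟨hm.1.trans hy.1.le, hy.2⟩)))
      refine le_of_tendsto ht ?_
      filter_upwards [Ioc_mem_nhdsGT hmc] with y hy using (hlt y hy).le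
    obtain ⟨y, hy1, hy2⟩ :=
      ((hright m ⟨hm.1, hm.2.trans hcb⟩ hmz).and (Ioc_mem_nhdsGT hmc)).exists
    exact absurd hy1 (not_lt.2 (hlt y hy2).le)
  rcases lt_trichotomy (φ b) 0 with h | h | h
  · exact absurd h (key b hab le_rfl)
  · obtain ⟨y, hy1, hy2⟩ := ((hleft b ⟨hab.le, le_rfl⟩ h).and (Ioo_mem_nhdsLT hab)).exists
    exact absurd hy1 (key y hy2.1 hy2.2.le)
  · exact h

/-- The tangent line inequality for the power function, with denominators cleared. -/
lemma rpow_tangent {α x y : ℝ} (hα : 1 < α) (hx : 0 ≤ x) (hy : 0 < y) :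
    y * (y ^ α - x ^ α) ≤ α * y ^ α * (y - x) := by
  have h := one_add_mul_self_le_rpow_one_add (s := x / y - 1) (p := α)
    (by have := div_nonneg hx hy.le; linarith) hα.le
  rw [add_sub_cancel, Real.div_rpow hx hy.le] at h
  have hyα : 0 < y ^ α := Real.rpow_pos_of_pos hy α
  rw [le_div_iff₀ hyα] at h
  have h2 : y * ((1 + α * (x / y - 1)) * y ^ α) = (y + α * (x - y)) * y ^ α := by
    field_simp
  nlinarith [mul_le_mul_of_nonneg_left h hy.le]

/-- Bernoulli's inequality for an exponent in `[0, 1]`. -/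
lemma one_sub_rpow_le {β x : ℝ} (hβ : 0 < β) (hβ1 : β < 1) (hx : x ≤ 1) :
    (1 - x) ^ β ≤ 1 - β * x := by
  have h := rpow_one_add_le_one_add_mul_self (s := -x) (by linarith) hβ.le hβ1.le
  rw [← sub_eq_add_neg] at h
  linarith

lemma rpow_of_eq {α β k w u : ℝ} (hαβ : β * α = 1) (hk : 0 < k) (hw : 0 ≤ w)
    (hu : u = k * w ^ β) : u ^ α = k ^ α * w := by
  rw [hu, Real.mul_rpow hk.le (Real.rpow_nonneg hw β), ← Real.rpow_mul hw, hαβ, Real.rpow_one]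

/-! ### Logarithmic derivatives along the recursion -/

/-- If `u` has logarithmic derivative `e` with respect to `log k`, then `k (1 - u)^β` has logarithmic
derivative `1 - β u / (1 - u) e`. -/
lemma elasticity_sub {β k e : ℝ} {u : ℝ → ℝ} (hk : 0 < k)
    (hu : HasDerivAt u (u k * e / k) k) (h : u k < 1) :
    HasDerivAt (fun t => t * (1 - u t) ^ β)
      (k * (1 - u k) ^ β * (1 - β * u k / (1 - u k) * e) / k) k := by
  have h1 : 0 < 1 - u k := by linarith
  have h2 := (hasDerivAt_id k).mul
    ((hu.const_sub 1).rpow_const (p := β) (Or.inl h1.ne'))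
  refine h2.congr_deriv ?_
  rw [Real.rpow_sub_one h1.ne']
  simp only [id]
  field_simp
  ring

/-- The counterpart of `elasticity_sub` for a step through the left branch. -/
lemma elasticity_add {β k e : ℝ} {u : ℝ → ℝ} (hk : 0 < k)
    (hu : HasDerivAt u (u k * e / k) k) (h : 0 ≤ u k) :
    HasDerivAt (fun t => t * (1 + u t) ^ β)
      (k * (1 + u k) ^ β * (1 + β * u k / (1 + u k) * e) / k) k := by
  have h1 : 0 < 1 + u k := by linarith
  have h2 := (hasDerivAt_id k).mul
    ((hu.const_add 1).rpow_const (p := β) (Or.inl h1.ne'))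
  refine h2.congr_deriv ?_
  rw [Real.rpow_sub_one h1.ne']
  simp only [id]
  field_simp

/-- The logarithmic derivative of `U5`. -/
noncomputable def E5 (β k : ℝ) : ℝ :=
  1 + β * U6 β k / (1 + U6 β k) * (1 - β * k / (1 - k))

/-- The logarithmic derivative of `U1`. -/
noncomputable def E1 (β k : ℝ) : ℝ :=
  1 + β * U2 β k / (1 + U2 β k) * (1 - β * U3 β k / (1 - U3 β k) *
    (1 - β * U4 β k / (1 - U4 β k) * (1 - β * U5 β k / (1 - U5 β k) * E5 β k)))

lemma U6_pos {β k : ℝ} (hk : 0 < k) (hk1 : k < 1) : 0 < U6 β k :=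
  mul_pos hk (Real.rpow_pos_of_pos (by linarith) _)

lemma U5_pos {β k : ℝ} (hk : 0 < k) (hk1 : k < 1) : 0 < U5 β k :=
  mul_pos hk (Real.rpow_pos_of_pos (by linarith [U6_pos (β := β) hk hk1]) _)

lemma hasDerivAt_U5 {β k : ℝ} (hk : 0 < k) (hk1 : k < 1) :
    HasDerivAt (U5 β) (U5 β k * E5 β k / k) k := by
  have h7 : HasDerivAt (fun t : ℝ => t) (k * 1 / k) k := by
    rw [mul_one, div_self hk.ne']; exact hasDerivAt_id k
  have h6 := elasticity_sub (β := β) (u := fun t => t) hk h7 hk1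
  have h5 := elasticity_add (β := β) (u := U6 β) hk h6 (U6_pos hk hk1).le
  refine h5.congr_deriv ?_
  simp only [mul_one]
  rfl

/-- The sizes of the intermediate points when `u₅ < 1`. -/
lemma basic_bounds {β k : ℝ} (hβ : 0 < β) (hk : 0 < k) (hk1 : k < 1) (h5 : U5 β k < 1) :
    0 < U4 β k ∧ U4 β k < 1 ∧ 0 < U3 β k ∧ U3 β k < k ∧ U6 β k < U2 β k ∧ U2 β k < 1 := by
  have h5p := U5_pos (β := β) hk hk1
  have p4 : 0 < U4 β k := mul_pos hk (Real.rpow_pos_of_pos (by linarith) _)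
  have l4 : U4 β k < 1 := by
    have := Real.rpow_le_one (x := 1 - U5 β k) (by linarith) (by linarith) hβ.le
    unfold U4; nlinarith
  have p3 : 0 < U3 β k := mul_pos hk (Real.rpow_pos_of_pos (by linarith) _)
  have l3 : U3 β k < k := by
    have := Real.rpow_lt_one (x := 1 - U4 β k) (by linarith) (by linarith) hβ
    unfold U3; nlinarith
  have l2 : U2 β k < 1 := by
    have := Real.rpow_le_one (x := 1 - U3 β k) (by linarith) (by linarith) hβ.le
    unfold U2; nlinarith
  refine ⟨p4, l4, p3, l3, ?_, l2⟩
  exact mul_lt_mul_of_pos_left (Real.rpow_lt_rpow (by linarith) (by linarith) hβ) hk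

lemma hasDerivAt_U1 {β k : ℝ} (hβ : 0 < β) (hk : 0 < k) (hk1 : k < 1) (h5 : U5 β k < 1) :
    HasDerivAt (U1 β) (U1 β k * E1 β k / k) k := by
  obtain ⟨-, l4, -, l3, l6, -⟩ := basic_bounds hβ hk hk1 h5
  have d4 := elasticity_sub (β := β) hk (hasDerivAt_U5 hk hk1) h5
  have d3 := elasticity_sub (β := β) (u := U4 β) hk d4 l4
  have d2 := elasticity_sub (β := β) (u := U3 β) hk d3 (l3.trans hk1)
  exact elasticity_add (β := β) (u := U2 β) hk d2 ((U6_pos hk hk1).le.trans l6.le)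

/-! ### Transversality -/

lemma E5_pos {α β k : ℝ} (hα : 1 < α) (hβ : 0 < β) (hαβ : β * α = 1)
    (hk : 0 < k) (hk1 : k < 1) (h5 : U5 β k ≤ 1) : 0 < E5 β k := by
  have h6 := U6_pos (β := β) hk hk1
  have hβ1 : β < 1 := by nlinarith
  have r5 := rpow_of_eq (u := U5 β k) hαβ hk (by linarith : 0 ≤ 1 + U6 β k) rfl
  have r5' : U5 β k ^ α ≤ 1 := Real.rpow_le_one (U5_pos hk hk1).le h5 (by linarith)
  have hb := rpow_tangent hα hk.le one_pos
  rw [Real.one_rpow] at hb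
  -- `u₆ ≤ α (1 - k) (1 + u₆)`, so that `q₆ p₇ ≤ β k < 1`.
  have h1 : U6 β k ≤ α * (1 - k) * (1 + U6 β k) := by nlinarith
  have h2 : β * U6 β k ≤ (1 - k) * (1 + U6 β k) := by
    calc β * U6 β k ≤ β * (α * (1 - k) * (1 + U6 β k)) := by gcongr
      _ = (β * α) * ((1 - k) * (1 + U6 β k)) := by ring
      _ = _ := by rw [hαβ, one_mul]
  have hk' : 0 < 1 - k := by linarith
  have h6' : 0 < 1 + U6 β k := by linarith
  have e : E5 β k = ((1 + U6 β k) * (1 - k) + β * U6 β k * (1 - k) - β * U6 β k * (β * k)) /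
      ((1 + U6 β k) * (1 - k)) := by
    unfold E5; field_simp; ring
  rw [e]
  apply div_pos _ (by positivity)
  have h3 : β * k < 1 := by nlinarith
  nlinarith [mul_pos hβ h6, mul_pos (mul_pos hβ h6) hk',
    mul_le_mul_of_nonneg_right h2 (by positivity : 0 ≤ β * k), mul_pos h6' hk']

/-- The derivative of the fourth iterate at the critical value is at least `1` in modulus, with
denominators cleared. -/
lemma multiplier_bound {α β k : ℝ} (hα : 1 < α) (hβ : 0 < β) (hαβ : β * α = 1)
    (hk : 0 < k) (hk1 : k < 1) (h5 : U5 β k < 1) (h1 : U1 β k = 1) :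
    U2 β k * U3 β k * U4 β k ≤
      α ^ 4 * ((1 + U2 β k) * (1 - U3 β k) * (1 - U4 β k) * (1 - U5 β k)) := by
  obtain ⟨p4, l4, p3, l3, l6, l2⟩ := basic_bounds hβ hk hk1 h5
  have p6 := U6_pos (β := β) hk hk1
  have p5 := U5_pos (β := β) hk hk1
  have hβ1 : β < 1 := by nlinarith
  have r6 := rpow_of_eq (u := U6 β k) hαβ hk (by linarith : 0 ≤ 1 - k) rfl
  have r5 := rpow_of_eq (u := U5 β k) hαβ hk (by linarith : 0 ≤ 1 + U6 β k) rfl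
  have r3 := rpow_of_eq (u := U3 β k) hαβ hk (by linarith : 0 ≤ 1 - U4 β k) rfl
  have r2 := rpow_of_eq (u := U2 β k) hαβ hk (by linarith : 0 ≤ 1 - U3 β k) rfl
  have r1 := rpow_of_eq (u := U1 β k) hαβ hk (by linarith : 0 ≤ 1 + U2 β k) rfl
  rw [h1, Real.one_rpow] at r1
  have t1 := rpow_tangent hα p5.le one_pos
  have t2 := rpow_tangent hα p6.le (p6.trans l6)
  have t3 := rpow_tangent hα p3.le hk
  have hu3 : U3 β k = k * (1 - U4 β k) ^ β := rfl
  have hu4 : U4 β k = k * (1 - U5 β k) ^ β := rfl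
  have hk5 : k ≤ U5 β k := by
    have := Real.one_le_rpow (x := 1 + U6 β k) (by linarith) hβ.le
    unfold U5; nlinarith
  have b4 : U4 β k ≤ k * (1 - β * k) := by
    rw [hu4]
    gcongr
    exact (Real.rpow_le_rpow (by linarith) (by linarith) hβ.le).trans
      (one_sub_rpow_le hβ hβ1 hk1.le)
  have b3 : U3 β k ≤ k * (1 - β * U4 β k) := by
    rw [hu3]
    gcongr
    exact one_sub_rpow_le hβ hβ1 l4.le
  have hK : 0 < k ^ α := Real.rpow_pos_of_pos hk α
  rw [Real.one_rpow, r5] at t1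
  rw [r2, r6] at t2
  rw [r3] at t3
  generalize U6 β k = u6 at *
  generalize U5 β k = u5 at *
  generalize U4 β k = u4 at *
  generalize U3 β k = u3 at *
  generalize U2 β k = v at *
  generalize k ^ α = K at *
  have t1' : v - u6 ≤ α * (1 + v) * (1 - u5) := by
    refine le_of_mul_le_mul_left ?_ hK
    calc K * (v - u6) = 1 * (1 - K * (1 + u6)) := by linear_combination -r1
      _ ≤ α * 1 * (1 - u5) := t1
      _ = K * (α * (1 + v) * (1 - u5)) := by linear_combination α * (1 - u5) * r1
  have t2' : v * (k - u3) ≤ α * (1 - u3) * (v - u6) := by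
    refine le_of_mul_le_mul_left ?_ hK
    linarith
  have t3' : k * u4 ≤ α * (k - u3) := by
    refine le_of_mul_le_mul_left ?_ hK
    linarith
  -- The bound `u₄ ≤ 1 / (1 + β)`, from `u₄ ≤ k (1 - k)^β ≤ k (1 - β k)`.
  have b4' : u4 * (1 + β) ≤ 1 := by
    have : k * (1 - β * k) * (1 + β) ≤ 1 := by
      have hkβ : 0 ≤ k * (1 - β * k) := mul_nonneg hk.le (by nlinarith)
      rcases le_total β (1 / 2) with h | h
      · have h2 : 0 ≤ (1 - k) * (1 - β * (1 + k)) :=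
          mul_nonneg (by linarith) (by nlinarith)
        have h3 : k * (1 - β * k) ≤ 1 - β := by linarith
        have h4 := mul_le_mul_of_nonneg_right h3 (by linarith : 0 ≤ 1 + β)
        have h6 := sq_nonneg β
        linarith
      · have h2 := mul_le_mul_of_nonneg_left (by linarith : 1 + β ≤ 4 * β) hkβ
        have h3 := sq_nonneg (2 * β * k - 1)
        linarith
    refine le_trans ?_ this
    gcongr
  -- `α (1 - u₄) ≥ 1 - β u₄` is equivalent to the previous bound.
  have b5 : u3 ≤ α * k * (1 - u4) := by
    have h : 1 - β * u4 ≤ α * (1 - u4) := by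
      refine le_of_mul_le_mul_left ?_ hβ
      have : β * (α * (1 - u4)) = 1 - u4 := by linear_combination (1 - u4) * hαβ
      rw [this]
      have h6 := mul_le_mul_of_nonneg_right b4' (by linarith : 0 ≤ 1 - β)
      linarith
    calc u3 ≤ k * (1 - β * u4) := b3
      _ ≤ k * (α * (1 - u4)) := by gcongr
      _ = _ := by ring
  have b6 : u3 * u4 ≤ α ^ 2 * (k - u3) * (1 - u4) := by
    calc u3 * u4 ≤ α * k * (1 - u4) * u4 := by gcongr
      _ = α * (1 - u4) * (k * u4) := by ring
      _ ≤ α * (1 - u4) * (α * (k - u3)) :=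
          mul_le_mul_of_nonneg_left t3' (mul_nonneg (by linarith) (by linarith))
      _ = _ := by ring
  have hv : 0 < v := p6.trans l6
  have h14 : 0 ≤ 1 - u4 := by linarith
  have h13 : 0 ≤ 1 - u3 := by linarith
  calc v * u3 * u4 = v * (u3 * u4) := by ring
    _ ≤ v * (α ^ 2 * (k - u3) * (1 - u4)) := by gcongr
    _ = α ^ 2 * (1 - u4) * (v * (k - u3)) := by ring
    _ ≤ α ^ 2 * (1 - u4) * (α * (1 - u3) * (v - u6)) := by gcongr
    _ ≤ α ^ 2 * (1 - u4) * (α * (1 - u3) * (α * (1 + v) * (1 - u5))) := by gcongr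
    _ = _ := by ring

/-- Transversality at a solution of `U1 β k = 1`. -/
lemma E1_pos {α β k : ℝ} (hα : 1 < α) (hβ : 0 < β) (hαβ : β * α = 1)
    (hk : 0 < k) (hk1 : k < 1) (h5 : U5 β k < 1) (h1 : U1 β k = 1) : 0 < E1 β k := by
  obtain ⟨p4, l4, p3, l3, l6, l2⟩ := basic_bounds hβ hk hk1 h5
  have p6 := U6_pos (β := β) hk hk1
  have p5 := U5_pos (β := β) hk hk1
  have hE5 := E5_pos hα hβ hαβ hk hk1 h5.le
  have hM := multiplier_bound hα hβ hαβ hk hk1 h5 h1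
  have r6 := rpow_of_eq (u := U6 β k) hαβ hk (by linarith : 0 ≤ 1 - k) rfl
  have r2 := rpow_of_eq (u := U2 β k) hαβ hk (by linarith : 0 ≤ 1 - U3 β k) rfl
  have hK : 0 < k ^ α := Real.rpow_pos_of_pos hk α
  have p2 : 0 < U2 β k := p6.trans l6
  -- `u₆^α / u₆ ≤ u₂^α / u₂`, rewritten through the recursion.
  have hr : U2 β k * (1 - k) ≤ U6 β k * (1 - U3 β k) := by
    have h := Real.rpow_le_rpow_of_exponent_ge (x := U6 β k / U2 β k) (by positivity)
      ((div_le_one p2).2 l6.le) hα.le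
    rw [Real.rpow_one, Real.div_rpow p6.le p2.le, r6, r2,
      mul_div_mul_left _ _ hK.ne', div_le_div_iff₀ (by linarith) p2] at h
    linarith
  have hE5e : E5 β k = 1 + β * U6 β k / (1 + U6 β k)
      - β * U6 β k / (1 + U6 β k) * (β * k / (1 - k)) := by unfold E5; ring
  unfold E1
  generalize E5 β k = e at *
  generalize U6 β k = u6 at *
  generalize U5 β k = u5 at *
  generalize U4 β k = u4 at *
  generalize U3 β k = u3 at *
  generalize U2 β k = v at *
  have hk' : 0 < 1 - k := by linarith
  have h3' : 0 < 1 - u3 := by linarith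
  have h4' : 0 < 1 - u4 := by linarith
  have h5' : 0 < 1 - u5 := by linarith
  have hq : β * u6 / (1 + u6) ≤ β * v / (1 + v) := by
    rw [div_le_div_iff₀ (by linarith) (by linarith)]
    nlinarith
  have hqp : β * v / (1 + v) * (β * u3 / (1 - u3)) ≤ β * u6 / (1 + u6) * (β * k / (1 - k)) := by
    rw [div_mul_div_comm, div_mul_div_comm, div_le_div_iff₀ (by positivity) (by positivity)]
    have h : (v * (1 - k)) * (u3 * (1 + u6)) ≤ (u6 * (1 - u3)) * (k * (1 + v)) := by
      gcongr
    calc β * v * (β * u3) * ((1 + u6) * (1 - k))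
        = β ^ 2 * ((v * (1 - k)) * (u3 * (1 + u6))) := by ring
      _ ≤ β ^ 2 * ((u6 * (1 - u3)) * (k * (1 + v))) := by gcongr
      _ = _ := by ring
  have hX : β * v / (1 + v) * (β * u3 / (1 - u3)) * (β * u4 / (1 - u4)) * (β * u5 / (1 - u5))
      < 1 := by
    rw [div_mul_div_comm, div_mul_div_comm, div_mul_div_comm, div_lt_one (by positivity)]
    have hβα4 : β ^ 4 * α ^ 4 = 1 := by rw [← mul_pow, hαβ, one_pow]
    calc β * v * (β * u3) * (β * u4) * (β * u5) = β ^ 4 * (v * u3 * u4) * u5 := by ring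
      _ ≤ β ^ 4 * (α ^ 4 * ((1 + v) * (1 - u3) * (1 - u4) * (1 - u5))) * u5 := by gcongr
      _ = (β ^ 4 * α ^ 4) * ((1 + v) * (1 - u3) * (1 - u4) * (1 - u5)) * u5 := by ring
      _ = ((1 + v) * (1 - u3) * (1 - u4) * (1 - u5)) * u5 := by rw [hβα4, one_mul]
      _ < ((1 + v) * (1 - u3) * (1 - u4) * (1 - u5)) * 1 := by gcongr
      _ = _ := by ring
  have hY : 0 < β * v / (1 + v) * (β * u3 / (1 - u3)) * (β * u4 / (1 - u4)) := by positivity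
  have hXe := mul_lt_mul_of_pos_right hX hE5
  generalize β * v / (1 + v) = q2 at *
  generalize β * u3 / (1 - u3) = p3 at *
  generalize β * u4 / (1 - u4) = p4 at *
  generalize β * u5 / (1 - u5) = p5 at *
  nlinarith

/-! ### Uniqueness and existence in the coordinate `k` -/

lemma continuous_U6 {β : ℝ} (hβ : 0 < β) : Continuous (U6 β) :=
  continuous_id.mul ((continuous_const.sub continuous_id).rpow_const fun _ => Or.inr hβ.le)

lemma continuous_U5 {β : ℝ} (hβ : 0 < β) : Continuous (U5 β) :=
  continuous_id.mul ((continuous_const.add (continuous_U6 hβ)).rpow_const fun _ => Or.inr hβ.le)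

lemma continuous_U4 {β : ℝ} (hβ : 0 < β) : Continuous (U4 β) :=
  continuous_id.mul ((continuous_const.sub (continuous_U5 hβ)).rpow_const fun _ => Or.inr hβ.le)

lemma continuous_U1 {β : ℝ} (hβ : 0 < β) : Continuous (U1 β) := by
  have h3 : Continuous (U3 β) := continuous_id.mul
    ((continuous_const.sub (continuous_U4 hβ)).rpow_const fun _ => Or.inr hβ.le)
  have h2 : Continuous (U2 β) := continuous_id.mul
    ((continuous_const.sub h3).rpow_const fun _ => Or.inr hβ.le)
  exact continuous_id.mul ((continuous_const.add h2).rpow_const fun _ => Or.inr hβ.le)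

/-- The set `{U5 ≤ 1}` is an initial segment of `(0, 1)`. -/
lemma U5_lt_one_of_lt {α β x y : ℝ} (hα : 1 < α) (hβ : 0 < β) (hαβ : β * α = 1)
    (hx : 0 < x) (hxy : x < y) (hy : y < 1) (h : U5 β y ≤ 1) : U5 β x < 1 := by
  by_contra hcon
  push Not at hcon
  have := pos_of_crossing_up (φ := fun t => U5 β t - 1) hxy
    ((continuous_U5 hβ).sub continuous_const).continuousOn (by simpa using hcon) ?_
  · simp only [sub_pos] at this
    linarith
  · intro t ht h0
    have ht0 : 0 < t := hx.trans_le ht.1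
    have ht1 : t < 1 := ht.2.trans_lt hy
    have h1 : U5 β t = 1 := by simpa [sub_eq_zero] using h0
    refine ⟨_, ?_, (hasDerivAt_U5 ht0 ht1).sub_const 1⟩
    exact div_pos (mul_pos (U5_pos ht0 ht1) (E5_pos hα hβ hαβ ht0 ht1 h1.le)) ht0

lemma not_two_solutions {α β x y : ℝ} (hα : 1 < α) (hβ : 0 < β) (hαβ : β * α = 1)
    (hx : 0 < x) (hy : y < 1) (h5 : U5 β y < 1) (hx1 : U1 β x = 1) (hy1 : U1 β y = 1) :
    ¬ x < y := by
  intro hxy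
  have := pos_of_crossing_up (φ := fun t => U1 β t - 1) hxy
    ((continuous_U1 hβ).sub continuous_const).continuousOn (by simp [hx1]) ?_
  · simp [hy1] at this
  · intro t ht h0
    have ht0 : 0 < t := hx.trans_le ht.1
    have ht1 : t < 1 := ht.2.trans_lt hy
    have h1 : U1 β t = 1 := by simpa [sub_eq_zero] using h0
    have h5t : U5 β t < 1 := by
      rcases ht.2.eq_or_lt with h | h
      · rwa [h]
      · exact U5_lt_one_of_lt hα hβ hαβ ht0 h hy h5.le
    refine ⟨_, ?_, (hasDerivAt_U1 hβ ht0 ht1 h5t).sub_const 1⟩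
    rw [h1, one_mul]
    exact div_pos (E1_pos hα hβ hαβ ht0 ht1 h5t h1) ht0

/-- The superstable parameter of period `4`. -/
lemma exists_U5_eq_one {α β : ℝ} (hα : 1 < α) (hβ : 0 < β) (hαβ : β * α = 1) :
    ∃ s, 0 < s ∧ s < 1 ∧ U5 β s = 1 := by
  have hβ1 : β < 1 := by nlinarith
  -- With `δ = (β / 4)^(1 / (1 - β))` one has `δ = (β / 4) δ^β`, and `U5 β (1 - δ) ≥ 1`.
  obtain ⟨δ, hδ, hδβ, hδ4⟩ : ∃ δ : ℝ, 0 < δ ∧ α * δ = 1 / 4 * δ ^ β ∧ α * δ ≤ 1 / 4 := by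
    have hb : 0 < β / 4 := by linarith
    have hpos := Real.rpow_pos_of_pos hb (1 / (1 - β))
    have he : α * (β / 4) ^ (1 / (1 - β)) = 1 / 4 * ((β / 4) ^ (1 / (1 - β))) ^ β := by
      have h1 : ((β / 4) ^ (1 / (1 - β))) ^ (1 - β) = β / 4 := by
        rw [← Real.rpow_mul hb.le, one_div_mul_cancel (by linarith), Real.rpow_one]
      have h2 : (β / 4) ^ (1 / (1 - β))
          = ((β / 4) ^ (1 / (1 - β))) ^ (1 - β) * ((β / 4) ^ (1 / (1 - β))) ^ β := by
        rw [← Real.rpow_add hpos, sub_add_cancel, Real.rpow_one]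
      rw [h1] at h2
      calc α * (β / 4) ^ (1 / (1 - β)) = α * (β / 4 * ((β / 4) ^ (1 / (1 - β))) ^ β) := by
            rw [← h2]
        _ = (β * α) * (1 / 4 * ((β / 4) ^ (1 / (1 - β))) ^ β) := by ring
        _ = _ := by rw [hαβ, one_mul]
    refine ⟨_, hpos, he, ?_⟩
    rw [he]
    have h3 : (β / 4) ^ (1 / (1 - β)) ≤ 1 :=
      Real.rpow_le_one hb.le (by linarith) (by apply div_nonneg <;> linarith)
    have := Real.rpow_le_one hpos.le h3 hβ.le
    linarith
  have hδ' : δ ≤ 1 / 4 := by nlinarith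
  have hk : 0 < 1 - δ := by linarith
  have hU6 : U6 β (1 - δ) = (1 - δ) * (4 * (α * δ)) := by
    unfold U6; rw [sub_sub_cancel, hδβ]; ring
  have h6 := U6_pos (β := β) hk (by linarith)
  have hge : 1 ≤ U5 β (1 - δ) := by
    have r5 := rpow_of_eq (u := U5 β (1 - δ)) hαβ hk (by linarith : 0 ≤ 1 + U6 β (1 - δ)) rfl
    have hb := rpow_tangent hα hk.le one_pos
    rw [Real.one_rpow] at hb
    have : 1 ≤ U5 β (1 - δ) ^ α := by
      have h3 : 1 ≤ (1 - α * δ) * (1 + U6 β (1 - δ)) := by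
        rw [hU6]
        have : 0 < α * δ := by positivity
        have h9 : 9 / 16 ≤ (1 - α * δ) * (1 - δ) := by nlinarith
        nlinarith
      rw [r5]
      refine h3.trans ?_
      gcongr
      linarith
    by_contra hcon
    push Not at hcon
    have := Real.rpow_lt_one (U5_pos (β := β) hk (by linarith)).le hcon (by linarith : 0 < α)
    linarith
  have h0 : U5 β 0 = 0 := by simp [U5]
  obtain ⟨s, hs, hs1⟩ := intermediate_value_Icc hk.le (continuous_U5 hβ).continuousOn
    (show (1 : ℝ) ∈ Icc (U5 β 0) (U5 β (1 - δ)) from ⟨by rw [h0]; norm_num, hge⟩)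
  refine ⟨s, lt_of_le_of_ne hs.1 ?_, by linarith [hs.2], hs1⟩
  rintro rfl
  rw [h0] at hs1
  norm_num at hs1

/-- If the closing function is at most `1`, then `u₄` is bounded away from `0`. -/
lemma U4_lower_bound {α β k : ℝ} (hα : 1 < α) (hβ : 0 < β) (hαβ : β * α = 1)
    (hk : 0 < k) (hk1 : k < 1) (h5 : U5 β k < 1) (h1 : U1 β k ≤ 1) :
    β * k * (k ^ α) ^ 3 ≤ α ^ 2 * U4 β k ^ (α - 1) := by
  obtain ⟨p4, l4, p3, l3, l6, l2⟩ := basic_bounds hβ hk hk1 h5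
  have p6 := U6_pos (β := β) hk hk1
  have p5 := U5_pos (β := β) hk hk1
  have hβ1 : β < 1 := by nlinarith
  have p2 : 0 < U2 β k := p6.trans l6
  have r6 := rpow_of_eq (u := U6 β k) hαβ hk (by linarith : 0 ≤ 1 - k) rfl
  have r5 := rpow_of_eq (u := U5 β k) hαβ hk (by linarith : 0 ≤ 1 + U6 β k) rfl
  have r4 := rpow_of_eq (u := U4 β k) hαβ hk (by linarith : 0 ≤ 1 - U5 β k) rfl
  have r2 := rpow_of_eq (u := U2 β k) hαβ hk (by linarith : 0 ≤ 1 - U3 β k) rfl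
  have r1 := rpow_of_eq (u := U1 β k) hαβ hk (by linarith : 0 ≤ 1 + U2 β k) rfl
  have r1' : U1 β k ^ α ≤ 1 := Real.rpow_le_one
    (mul_nonneg hk.le (Real.rpow_nonneg (by linarith) _)) h1 (by linarith)
  rw [r1] at r1'
  have t1 := rpow_tangent hα p5.le one_pos
  have t2 := rpow_tangent hα p6.le p2
  have b3 : U3 β k ≤ k * (1 - β * U4 β k) := by
    have hu3 : U3 β k = k * (1 - U4 β k) ^ β := rfl
    rw [hu3]
    gcongr
    exact one_sub_rpow_le hβ hβ1 l4.le
  have hK : 0 < k ^ α := Real.rpow_pos_of_pos hk α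
  -- `u₂^α ≤ u₂`, which turns the tangent inequality into a Lipschitz bound.
  have hv : U2 β k ^ α ≤ U2 β k := by
    simpa using Real.rpow_le_rpow_of_exponent_ge p2 l2.le hα.le
  rw [Real.one_rpow, r5] at t1
  have t2' : k ^ α * (k - U3 β k) ≤ α * (U2 β k - U6 β k) := by
    refine le_of_mul_le_mul_left ?_ p2
    calc U2 β k * (k ^ α * (k - U3 β k)) = U2 β k * (U2 β k ^ α - U6 β k ^ α) := by
          rw [r2, r6]; ring
      _ ≤ α * U2 β k ^ α * (U2 β k - U6 β k) := t2
      _ ≤ α * U2 β k * (U2 β k - U6 β k) := by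
          have : 0 ≤ U2 β k - U6 β k := by linarith
          gcongr
      _ = _ := by ring
  have t1' : k ^ α * (U2 β k - U6 β k) ≤ α * (1 - U5 β k) := by linarith
  rw [Real.rpow_sub_one p4.ne', r4, mul_div_assoc', le_div_iff₀ p4]
  generalize k ^ α = K at *
  generalize U6 β k = u6 at *
  generalize U5 β k = u5 at *
  generalize U4 β k = u4 at *
  generalize U3 β k = u3 at *
  generalize U2 β k = v at *
  calc β * k * K ^ 3 * u4 = K ^ 2 * (K * (k * (β * u4))) := by ring
    _ ≤ K ^ 2 * (K * (k - u3)) := by gcongr; linarith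
    _ ≤ K ^ 2 * (α * (v - u6)) := by gcongr
    _ = α * K * (K * (v - u6)) := by ring
    _ ≤ α * K * (α * (1 - u5)) := by gcongr
    _ = _ := by ring

lemma exists_solution {α β : ℝ} (hα : 1 < α) (hβ : 0 < β) (hαβ : β * α = 1) :
    ∃ k, 0 < k ∧ k < 1 ∧ U5 β k < 1 ∧ U1 β k = 1 := by
  obtain ⟨s, hs0, hs1, hs⟩ := exists_U5_eq_one hα hβ hαβ
  have hU4 : U4 β s = 0 := by simp [U4, hs, Real.zero_rpow hβ.ne']
  -- At `s` the lower bound for `u₄` fails strictly, hence also nearby.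
  have hev : ∀ᶠ t in 𝓝 s, α ^ 2 * U4 β t ^ (α - 1) < β * t * (t ^ α) ^ 3 := by
    apply ContinuousAt.eventually_lt
    · exact (continuous_const.mul ((continuous_U4 hβ).rpow_const
        fun _ => Or.inr (by linarith))).continuousAt
    · exact ((continuous_const.mul continuous_id).mul
        ((continuous_id.rpow_const fun _ => Or.inr (by linarith)).pow 3)).continuousAt
    · rw [hU4, Real.zero_rpow (by linarith), mul_zero]
      positivity
  obtain ⟨t, ht, ht0, hts⟩ := ((hev.filter_mono nhdsWithin_le_nhds).and (Ioo_mem_nhdsLT hs0)).exists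
  have h5 := U5_lt_one_of_lt hα hβ hαβ ht0 hts hs1 hs.le
  have ht1 : 1 ≤ U1 β t := by
    by_contra hcon
    push Not at hcon
    exact absurd (U4_lower_bound hα hβ hαβ ht0 (hts.trans hs1) h5 hcon.le) (not_le.2 ht)
  have h0 : U1 β 0 = 0 := by simp [U1]
  obtain ⟨k, hk, hk1⟩ := intermediate_value_Icc ht0.le (continuous_U1 hβ).continuousOn
    (show (1 : ℝ) ∈ Icc (U1 β 0) (U1 β t) from ⟨by rw [h0]; norm_num, ht1⟩)
  have hk0 : 0 < k := by
    refine lt_of_le_of_ne hk.1 ?_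
    rintro rfl
    rw [h0] at hk1
    norm_num at hk1
  exact ⟨k, hk0, by linarith [hk.2],
    U5_lt_one_of_lt hα hβ hαβ hk0 (hk.2.trans_lt hts) hs1 hs.le, hk1⟩

/-! ### Passing between `a` and `k` -/

/-- One forward step in normalized coordinates. -/
lemma f_forward {α β a w x : ℝ} (hαβ : β * α = 1) (ha : 0 < a) (hw : 0 ≤ w)
    (hx : |x| = a * (a ^ (β - 1) * w ^ β)) : f α a x = a * (1 - w) := by
  have h : |x| = a ^ β * w ^ β := by
    rw [hx, Real.rpow_sub_one ha.ne']; field_simp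
  unfold f
  rw [rpow_of_eq hαβ (Real.rpow_pos_of_pos ha β) hw h, ← Real.rpow_mul ha.le, hαβ, Real.rpow_one]
  ring

/-- One backward step in normalized coordinates. -/
lemma f_backward {α β a x y : ℝ} (hαβ : α * β = 1) (ha : 0 < a)
    (h : f α a x = y) : |x| / a = a ^ (β - 1) * (1 - y / a) ^ β := by
  have h1 : 1 - y / a = |x| ^ α / a := by
    rw [← h]; unfold f; field_simp; ring
  rw [h1, Real.div_rpow (by positivity) ha.le, ← Real.rpow_mul (abs_nonneg x), hαβ, Real.rpow_one,
    Real.rpow_sub_one ha.ne']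
  have := (Real.rpow_pos_of_pos ha β).ne'
  field_simp

/-- A parameter with the prescribed itinerary gives a solution in the coordinate `k`. -/
lemma solution_of_itinerary {α β a : ℝ} (hα : 1 < α) (hβ : 0 < β) (hαβ : β * α = 1)
    (h1 : (f α a)^[1] 0 > 0) (h2 : (f α a)^[2] 0 < 0) (h3 : (f α a)^[3] 0 > 0)
    (h4 : (f α a)^[4] 0 > 0) (h5 : (f α a)^[5] 0 > 0) (h6 : (f α a)^[6] 0 < 0)
    (h7 : (f α a)^[7] 0 > 0) (h8 : (f α a)^[8] 0 = 0) :
    0 < a ∧ a ^ (β - 1) < 1 ∧ U5 β (a ^ (β - 1)) < 1 ∧ U1 β (a ^ (β - 1)) = 1 := by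
  have hβ1 : β < 1 := by nlinarith
  have hαβ' : α * β = 1 := by linarith
  have e1 : (f α a)^[1] 0 = a := by simp [f, Real.zero_rpow (by linarith : α ≠ 0)]
  have ha : 0 < a := by rw [e1] at h1; exact h1
  have step : ∀ n, f α a ((f α a)^[n] 0) = (f α a)^[n + 1] 0 := fun n =>
    (Function.iterate_succ_apply' _ _ _).symm
  have b1 := f_backward hαβ' ha (step 1)
  have b2 := f_backward hαβ' ha (step 2)
  have b3 := f_backward hαβ' ha (step 3)
  have b4 := f_backward hαβ' ha (step 4)
  have b5 := f_backward hαβ' ha (step 5)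
  have b6 := f_backward hαβ' ha (step 6)
  have b7 := f_backward hαβ' ha (step 7)
  simp only [Nat.reduceAdd] at b1 b2 b3 b4 b5 b6 b7
  rw [e1, abs_of_pos ha, div_self ha.ne'] at b1
  rw [abs_of_neg h2] at b2
  rw [abs_of_pos h3] at b3
  rw [abs_of_pos h4] at b4
  rw [abs_of_pos h5] at b5
  rw [abs_of_neg h6] at b6
  rw [abs_of_pos h7, h8, zero_div, sub_zero, Real.one_rpow, mul_one] at b7
  have a1 : 1 < a := by
    have := step 1
    rw [e1] at this
    have hlt : f α a a < 0 := by rw [this]; exact h2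
    unfold f at hlt
    rw [abs_of_pos ha] at hlt
    by_contra hcon
    push Not at hcon
    have := Real.rpow_le_rpow_of_exponent_ge ha hcon hα.le
    rw [Real.rpow_one] at this
    linarith
  have p : ∀ x : ℝ, 1 - x / a = 1 + -x / a := fun x => by ring
  have c6 : -(f α a)^[6] 0 / a = U6 β (a ^ (β - 1)) := by rw [b6, b7]; rfl
  have c5 : (f α a)^[5] 0 / a = U5 β (a ^ (β - 1)) := by rw [b5, p, c6]; rfl
  have c4 : (f α a)^[4] 0 / a = U4 β (a ^ (β - 1)) := by rw [b4, c5]; rfl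
  have c3 : (f α a)^[3] 0 / a = U3 β (a ^ (β - 1)) := by rw [b3, c4]; rfl
  have c2 : -(f α a)^[2] 0 / a = U2 β (a ^ (β - 1)) := by rw [b2, c3]; rfl
  refine ⟨ha, Real.rpow_lt_one_of_one_lt_of_neg a1 (by linarith), ?_, ?_⟩
  · rw [← c5, div_lt_one ha]
    have h45 : (f α a)^[5] 0 = -|(f α a)^[4] 0| ^ α + a := (step 4).symm
    have := Real.rpow_pos_of_pos (abs_pos.2 h4.ne') α
    linarith
  · rw [p, c2] at b1
    exact b1.symm

/-- Conversely, a solution in the coordinate `k` realizes the prescribed itinerary. -/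
lemma itinerary_of_solution {α β a : ℝ} (hα : 1 < α) (hβ : 0 < β) (hαβ : β * α = 1) (ha : 0 < a)
    (hk1 : a ^ (β - 1) < 1) (h5 : U5 β (a ^ (β - 1)) < 1) (h1 : U1 β (a ^ (β - 1)) = 1) :
      (f α a)^[1] 0 > 0 ∧ (f α a)^[2] 0 < 0 ∧ (f α a)^[3] 0 > 0 ∧
      (f α a)^[4] 0 > 0 ∧ (f α a)^[5] 0 > 0 ∧ (f α a)^[6] 0 < 0 ∧
      (f α a)^[7] 0 > 0 ∧ (f α a)^[8] 0 = 0 := by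
  have hk : 0 < a ^ (β - 1) := Real.rpow_pos_of_pos ha _
  obtain ⟨p4, l4, p3, l3, l6, l2⟩ := basic_bounds hβ hk hk1 h5
  have p6 := U6_pos (β := β) hk hk1
  have p5 := U5_pos (β := β) hk hk1
  have p2 := p6.trans l6
  have step : ∀ n, (f α a)^[n + 1] 0 = f α a ((f α a)^[n] 0) := fun n =>
    Function.iterate_succ_apply' _ _ _
  have ap : ∀ u : ℝ, 0 < u → |a * u| = a * u := fun u hu => abs_of_pos (mul_pos ha hu)
  have an : ∀ u : ℝ, 0 < u → |a * -u| = a * u := fun u hu => by rw [mul_neg, abs_neg, ap u hu]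
  have e1 : (f α a)^[1] 0 = a * 1 := by simp [f, Real.zero_rpow (by linarith : α ≠ 0)]
  have e2 : (f α a)^[2] 0 = a * -U2 β (a ^ (β - 1)) := by
    rw [step 1, e1, f_forward hαβ ha (w := 1 + U2 β (a ^ (β - 1))) (by linarith)
      (by rw [ap 1 one_pos]; nth_rewrite 1 [← h1]; rfl)]
    ring
  have e3 : (f α a)^[3] 0 = a * U3 β (a ^ (β - 1)) := by
    rw [step 2, e2, f_forward hαβ ha (w := 1 - U3 β (a ^ (β - 1))) (by linarith)
      (by rw [an _ p2]; rfl)]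
    ring
  have e4 : (f α a)^[4] 0 = a * U4 β (a ^ (β - 1)) := by
    rw [step 3, e3, f_forward hαβ ha (w := 1 - U4 β (a ^ (β - 1))) (by linarith)
      (by rw [ap _ p3]; rfl)]
    ring
  have e5 : (f α a)^[5] 0 = a * U5 β (a ^ (β - 1)) := by
    rw [step 4, e4, f_forward hαβ ha (w := 1 - U5 β (a ^ (β - 1))) (by linarith)
      (by rw [ap _ p4]; rfl)]
    ring
  have e6 : (f α a)^[6] 0 = a * -U6 β (a ^ (β - 1)) := by
    rw [step 5, e5, f_forward hαβ ha (w := 1 + U6 β (a ^ (β - 1))) (by linarith)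
      (by rw [ap _ p5]; rfl)]
    ring
  have e7 : (f α a)^[7] 0 = a * a ^ (β - 1) := by
    rw [step 6, e6, f_forward hαβ ha (w := 1 - a ^ (β - 1)) (by linarith)
      (by rw [an _ p6]; rfl)]
    ring
  have e8 : (f α a)^[8] 0 = 0 := by
    rw [step 7, e7, f_forward hαβ ha (w := 1) (by linarith)
      (by rw [ap _ hk, Real.one_rpow, mul_one])]
    ring
  refine ⟨?_, ?_, ?_, ?_, ?_, ?_, ?_, e8⟩
  · rw [e1]; positivity
  · rw [e2]; nlinarith
  · rw [e3]; positivity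
  · rw [e4]; positivity
  · rw [e5]; positivity
  · rw [e6]; nlinarith
  · rw [e7]; positivity

/-- Theorem 4.1: in every power-law family there is exactly one parameter whose
critical orbit realizes the kneading sequence `RLRRRLRC`. -/
theorem stmt16 (α : ℝ) (hα : 1 < α) :
    ∃! a : ℝ,
      (f α a)^[1] 0 > 0 ∧ (f α a)^[2] 0 < 0 ∧ (f α a)^[3] 0 > 0 ∧
      (f α a)^[4] 0 > 0 ∧ (f α a)^[5] 0 > 0 ∧ (f α a)^[6] 0 < 0 ∧
      (f α a)^[7] 0 > 0 ∧ (f α a)^[8] 0 = 0 := by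
  obtain ⟨β, hβ, hαβ⟩ : ∃ β : ℝ, 0 < β ∧ β * α = 1 :=
    ⟨α⁻¹, by positivity, inv_mul_cancel₀ (by linarith)⟩
  have hβ1 : β < 1 := by nlinarith
  obtain ⟨k, hk, hk1, h5, h1⟩ := exists_solution hα hβ hαβ
  have hak : (k ^ (β - 1)⁻¹) ^ (β - 1) = k := Real.rpow_inv_rpow hk.le (by linarith)
  refine ⟨k ^ (β - 1)⁻¹, ?_, ?_⟩
  · refine itinerary_of_solution hα hβ hαβ (Real.rpow_pos_of_pos hk _) ?_ ?_ ?_ <;> rwa [hak]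
  · rintro a ⟨g1, g2, g3, g4, g5, g6, g7, g8⟩
    obtain ⟨ha, m1, m5, m⟩ := solution_of_itinerary hα hβ hαβ g1 g2 g3 g4 g5 g6 g7 g8
    have hm : 0 < a ^ (β - 1) := Real.rpow_pos_of_pos ha _
    have heq : a ^ (β - 1) = k := le_antisymm
      (not_lt.1 (not_two_solutions hα hβ hαβ hk m1 m5 h1 m))
      (not_lt.1 (not_two_solutions hα hβ hαβ hm hk1 h5 m h1))
    rw [← heq, Real.rpow_rpow_inv ha.le (by linarith)]
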